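/- Let A ∈ ℝ^{m×n} have columns of unit ℓ2-norm and mutual coherence μ, let k ≥ 2 be an integer with μ < 1/(2k−1), let λ > 0, let b = Ax + z with ‖z‖₂ ≤ λ, and let x^♯ be a minimizer of u ↦ ‖u‖₁ + (1/(2λ))‖b − Au‖₂². Then ‖x^♯ − x‖₂ ≤ Ĉ₃·‖x − x_[k]‖₁ + Ĉ₄·λ, where Ĉ₃ = (2√k·α₁·f_k(α₂) + 2·g_k(α₂))/(√k·(1 − √k·α₂)·(√k·α₁ + 1)) and Ĉ₄ = (√k·α₁·(5 + 2√k·α₂) + 2·g_k(α₂))·(√k·α₁ + 1)/(√k·(1 − √k·α₂)), with α₁ = √(1+(k−1)μ)/(1−(k−1)μ), α₂ = √k·μ/(1−(k−1)μ), f_k(t) = k t² + 3√k t + 3, and g_k(t) = 2k t² + 4√k t + 1. -/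

import Mathlib

noncomputable def l2norm {ι : Type*} [Fintype ι] (v : ι → ℝ) : ℝ :=
  Real.sqrt (∑ i, (v i) ^ 2)

noncomputable def l1norm {ι : Type*} [Fintype ι] (v : ι → ℝ) : ℝ :=
  ∑ i, |v i|

noncomputable def linfnorm {ι : Type*} [Fintype ι] (v : ι → ℝ) : ℝ :=
  ⨆ i, |v i|

/-- The mutual coherence of a matrix: the largest absolute inner product
between two distinct columns. -/
noncomputable def mutualCoherence {m n : ℕ} (A : Matrix (Fin m) (Fin n) ℝ) : ℝ :=
  ⨆ p : {p : Fin n × Fin n // p.1 ≠ p.2}, |∑ r, A r p.1.1 * A r p.1.2|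

/-- `restrict v E` agrees with `v` on `E` and vanishes outside of `E`. -/
def restrict {n : ℕ} (v : Fin n → ℝ) (E : Finset (Fin n)) : Fin n → ℝ :=
  fun i => if i ∈ E then v i else 0

/-- A vector is `k`-sparse if it has at most `k` nonzero entries. -/
def sparse {n : ℕ} (k : ℕ) (v : Fin n → ℝ) : Prop :=
  (Finset.univ.filter fun i => v i ≠ 0).card ≤ k

noncomputable def alpha1 (k : ℕ) (μ : ℝ) : ℝ :=
  Real.sqrt (1 + ((k : ℝ) - 1) * μ) / (1 - ((k : ℝ) - 1) * μ)

noncomputable def alpha2 (k : ℕ) (μ : ℝ) : ℝ :=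
  Real.sqrt k * μ / (1 - ((k : ℝ) - 1) * μ)

noncomputable def fk (k : ℕ) (t : ℝ) : ℝ :=
  (k : ℝ) * t ^ 2 + 3 * Real.sqrt k * t + 3

noncomputable def gk (k : ℕ) (t : ℝ) : ℝ :=
  2 * (k : ℝ) * t ^ 2 + 4 * Real.sqrt k * t + 1


lemma l2_sq {ι : Type*} [Fintype ι] (v : ι → ℝ) : l2norm v ^ 2 = ∑ i, (v i) ^ 2 :=
  Real.sq_sqrt (Finset.sum_nonneg fun i _ => sq_nonneg _)

lemma l2_nonneg {ι : Type*} [Fintype ι] (v : ι → ℝ) : 0 ≤ l2norm v := Real.sqrt_nonneg _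

lemma l1_nonneg {ι : Type*} [Fintype ι] (v : ι → ℝ) : 0 ≤ l1norm v :=
  Finset.sum_nonneg fun i _ => abs_nonneg _

lemma cs_l2 {ι : Type*} [Fintype ι] (u v : ι → ℝ) : ∑ i, u i * v i ≤ l2norm u * l2norm v := by
  refine (abs_le_of_sq_le_sq' ?_ (mul_nonneg (l2_nonneg u) (l2_nonneg v))).2
  rw [mul_pow, l2_sq, l2_sq]
  exact Finset.sum_mul_sq_le_sq_mul_sq _ _ _

lemma mc_nonneg {m n : ℕ} (A : Matrix (Fin m) (Fin n) ℝ) : 0 ≤ mutualCoherence A :=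
  Real.iSup_nonneg fun _ => abs_nonneg _

lemma mc_le {m n : ℕ} (A : Matrix (Fin m) (Fin n) ℝ) (i j : Fin n) (h : i ≠ j) :
    |∑ r, A r i * A r j| ≤ mutualCoherence A :=
  le_ciSup (f := fun p : {p : Fin n × Fin n // p.1 ≠ p.2} => |∑ r, A r p.1.1 * A r p.1.2|)
    (Set.finite_range _).bddAbove ⟨(i, j), h⟩

lemma gram {m n : ℕ} (A : Matrix (Fin m) (Fin n) ℝ) (p q : Fin n → ℝ) :
    ∑ r, A.mulVec p r * A.mulVec q r = ∑ i, ∑ j, (∑ r, A r i * A r j) * (p i * q j) := by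
  simp only [Matrix.mulVec, dotProduct, Finset.sum_mul_sum]
  rw [Finset.sum_comm]
  refine Finset.sum_congr rfl fun i _ => ?_
  rw [Finset.sum_comm]
  refine Finset.sum_congr rfl fun j _ => ?_
  rw [Finset.sum_mul]
  exact Finset.sum_congr rfl fun r _ => by ring

lemma gram_bound {m n : ℕ} (A : Matrix (Fin m) (Fin n) ℝ)
    (hA : ∀ j, l2norm (fun i => A i j) = 1) (p q : Fin n → ℝ) :
    |∑ r, A.mulVec p r * A.mulVec q r - ∑ i, p i * q i| ≤
      mutualCoherence A * (l1norm p * l1norm q - ∑ i, |p i| * |q i|) := by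
  have e1 : ∑ i, p i * q i = ∑ i, ∑ j, (if i = j then p i * q j else 0) := by simp
  have e2 : ∑ i, |p i| * |q i| = ∑ i, ∑ j, (if i = j then |p i| * |q j| else 0) := by simp
  rw [gram, e1, e2, l1norm, l1norm, Finset.sum_mul_sum, ← Finset.sum_sub_distrib,
    ← Finset.sum_sub_distrib, Finset.mul_sum]
  refine (Finset.abs_sum_le_sum_abs _ _).trans (Finset.sum_le_sum fun i _ => ?_)
  rw [← Finset.sum_sub_distrib, ← Finset.sum_sub_distrib, Finset.mul_sum]
  refine (Finset.abs_sum_le_sum_abs _ _).trans (Finset.sum_le_sum fun j _ => ?_)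
  by_cases h : i = j
  · subst h
    have := l2_sq (fun r => A r i)
    rw [hA] at this
    have h1 : ∑ r, A r i * A r i = 1 := by
      rw [← one_pow 2, this]; exact Finset.sum_congr rfl fun r _ => by ring
    simp [h1]
  · simp only [h, if_false, sub_zero, abs_mul]
    exact mul_le_mul_of_nonneg_right (mc_le A i j h) (by positivity)

/-- Existence of a set of the `k` largest entries. -/
lemma exists_top {n : ℕ} (h : Fin n → ℝ) (k : ℕ) : ∃ S : Finset (Fin n), S.card ≤ k ∧
    (∀ T : Finset (Fin n), T.card ≤ k → ∑ i ∈ T, |h i| ≤ ∑ i ∈ S, |h i|) ∧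
    ∀ i, i ∉ S → (k : ℝ) * |h i| ≤ ∑ j ∈ S, |h j| := by
  obtain ⟨S, hS, hmax⟩ := Finset.exists_max_image
    ((Finset.univ : Finset (Finset (Fin n))).filter fun T => T.card ≤ k)
    (fun T => ∑ i ∈ T, |h i|) ⟨∅, by simp⟩
  simp only [Finset.mem_filter, Finset.mem_univ, true_and] at hS hmax
  refine ⟨S, hS, hmax, fun i hi => ?_⟩
  rcases hS.lt_or_eq with hlt | heq
  · have := hmax (insert i S) (by rw [Finset.card_insert_of_notMem hi]; omega)
    rw [Finset.sum_insert hi] at this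
    have h0 : |h i| = 0 := le_antisymm (by linarith) (abs_nonneg _)
    rw [h0, mul_zero]
    exact Finset.sum_nonneg fun _ _ => abs_nonneg _
  · rw [← heq, ← nsmul_eq_mul]
    refine Finset.card_nsmul_le_sum _ _ _ fun j hj => ?_
    have hi' : i ∉ S.erase j := fun hh => hi (Finset.mem_of_mem_erase hh)
    have := hmax (insert i (S.erase j)) (by
      rw [Finset.card_insert_of_notMem hi', Finset.card_erase_of_mem hj]
      have := Finset.card_pos.2 ⟨j, hj⟩
      omega)
    rw [Finset.sum_insert hi', ← Finset.add_sum_erase S _ hj] at this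
    linarith

lemma sum_restrict {n : ℕ} (h : Fin n → ℝ) (S : Finset (Fin n)) (g : ℝ → ℝ) (g0 : g 0 = 0) :
    ∑ i, g (restrict h S i) = ∑ i ∈ S, g (h i) := by
  simp only [restrict, apply_ite g, g0]
  simp

lemma l1_le_l2 {n : ℕ} (h : Fin n → ℝ) (k : ℕ) (S : Finset (Fin n)) (hS : S.card ≤ k) :
    l1norm (restrict h S) ≤ Real.sqrt k * l2norm (restrict h S) := by
  refine abs_le_of_sq_le_sq' ?_ (mul_nonneg (Real.sqrt_nonneg _) (l2_nonneg _)) |>.2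
  rw [mul_pow, l2_sq, Real.sq_sqrt (Nat.cast_nonneg _), l1norm,
    sum_restrict h S (fun t => |t|) (by simp), sum_restrict h S (fun t => t ^ 2) (by simp)]
  refine sq_sum_le_card_mul_sum_sq.trans ?_
  simp only [sq_abs]
  exact mul_le_mul_of_nonneg_right (by exact_mod_cast hS)
    (Finset.sum_nonneg fun _ _ => sq_nonneg _)

/-- The coherence-based bound on the head. -/
lemma head_bound {m n : ℕ} (A : Matrix (Fin m) (Fin n) ℝ)
    (hA : ∀ j, l2norm (fun i => A i j) = 1) (k : ℕ) (hk : 2 ≤ k)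
    (hpos : 0 < 1 - ((k : ℝ) - 1) * mutualCoherence A)
    (h : Fin n → ℝ) (S : Finset (Fin n)) (hS : S.card ≤ k) :
    l2norm (restrict h S) ≤ alpha1 k (mutualCoherence A) * l2norm (A.mulVec h)
      + alpha2 k (mutualCoherence A) * l1norm (restrict h Sᶜ) := by
  set μ := mutualCoherence A with hμ
  have hμ0 : 0 ≤ μ := mc_nonneg A
  set v := restrict h S with hv
  set u := restrict h Sᶜ with hu
  have hk1 : (1 : ℝ) ≤ k := by exact_mod_cast (by omega : 1 ≤ k)
  have hvu : h = v + u := by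
    funext i
    by_cases hi : i ∈ S <;> simp [hv, hu, restrict, hi]
  have hdis : ∀ i, v i * u i = 0 := by
    intro i
    by_cases hi : i ∈ S <;> simp [hv, hu, restrict, hi]
  have hdis' : ∀ i, |v i| * |u i| = 0 := by
    intro i; rw [← abs_mul, hdis]; simp
  have g1 := gram_bound A hA v v
  have g2 := gram_bound A hA v u
  simp only [hdis, hdis', Finset.sum_const_zero, sub_zero] at g2
  have s1 : ∑ i, v i * v i = l2norm v ^ 2 := by
    rw [l2_sq]; exact Finset.sum_congr rfl fun _ _ => by ring
  have s2 : ∑ i, |v i| * |v i| = l2norm v ^ 2 := by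
    rw [l2_sq]; exact Finset.sum_congr rfl fun _ _ => by rw [← sq, sq_abs]
  have s3 : ∑ r, A.mulVec v r * A.mulVec v r = l2norm (A.mulVec v) ^ 2 := by
    rw [l2_sq]; exact Finset.sum_congr rfl fun _ _ => by ring
  rw [s1, s2, s3] at g1
  have s4 : ∑ r, A.mulVec v r * A.mulVec h r
      = l2norm (A.mulVec v) ^ 2 + ∑ r, A.mulVec v r * A.mulVec u r := by
    have e : A.mulVec h = A.mulVec v + A.mulVec u := by rw [← Matrix.mulVec_add, ← hvu]
    rw [← s3, ← Finset.sum_add_distrib, e]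
    exact Finset.sum_congr rfl fun _ _ => by simp only [Pi.add_apply]; ring
  have c1 := cs_l2 (A.mulVec v) (A.mulVec h)
  rw [s4] at c1
  have n1 := l1_le_l2 h k S hS
  rw [← hv] at n1
  set s := l2norm v
  set w := l2norm (A.mulVec h)
  set y := l2norm (A.mulVec v)
  set N := l1norm v
  set R := l1norm u
  have hs : 0 ≤ s := l2_nonneg _
  have hw : 0 ≤ w := l2_nonneg _
  have hy : 0 ≤ y := l2_nonneg _
  have hN : 0 ≤ N := l1_nonneg _
  have hR : 0 ≤ R := l1_nonneg _
  have hsk : Real.sqrt k ^ 2 = k := Real.sq_sqrt (Nat.cast_nonneg _)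
  have hN2 : N * N ≤ k * s ^ 2 := by
    rw [← hsk, ← mul_pow, sq]; exact mul_self_le_mul_self hN n1
  have hb1 : μ * (N * N - s ^ 2) ≤ μ * ((k - 1) * s ^ 2) :=
    mul_le_mul_of_nonneg_left (by linarith) hμ0
  obtain ⟨g1a, g1b⟩ := abs_le.1 g1
  obtain ⟨g2a, g2b⟩ := abs_le.1 g2
  have hy2 : y ≤ Real.sqrt (1 + (k - 1) * μ) * s := by
    refine abs_le_of_sq_le_sq' ?_ (mul_nonneg (Real.sqrt_nonneg _) hs) |>.2
    rw [mul_pow, Real.sq_sqrt (by nlinarith)]; linarith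
  have hNR : μ * (N * R) ≤ μ * (Real.sqrt k * s * R) := by gcongr
  have hyw : y * w ≤ Real.sqrt (1 + (k - 1) * μ) * s * w := by gcongr
  have key : s * ((1 - (k - 1) * μ) * s)
      ≤ s * (Real.sqrt (1 + (k - 1) * μ) * w + Real.sqrt k * μ * R) := by
    nlinarith
  have fin : (1 - (k - 1) * μ) * s ≤ Real.sqrt (1 + (k - 1) * μ) * w + Real.sqrt k * μ * R := by
    rcases hs.eq_or_lt with h0 | h0
    · rw [← h0, mul_zero]; positivity
    · exact le_of_mul_le_mul_left key h0
  have : alpha1 k μ * w + alpha2 k μ * R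
      = (Real.sqrt (1 + (k - 1) * μ) * w + Real.sqrt k * μ * R) / (1 - (k - 1) * μ) := by
    unfold alpha1 alpha2; field_simp
  rw [this, le_div_iff₀ hpos]; linarith

/-- l2 bound through the top-k set. -/
lemma tail_bound {n : ℕ} (h : Fin n → ℝ) (k : ℕ) (S : Finset (Fin n))
    (hS : S.card ≤ k) (hk : 2 ≤ k)
    (htop : ∀ i, i ∉ S → (k : ℝ) * |h i| ≤ ∑ j ∈ S, |h j|) :
    Real.sqrt k * l2norm h ≤ Real.sqrt k * l2norm (restrict h S) + l1norm (restrict h Sᶜ) / 2 := by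
  have hP := l1_le_l2 h k S hS
  have hsk : Real.sqrt k ^ 2 = k := Real.sq_sqrt (Nat.cast_nonneg _)
  have hs := l2_nonneg (restrict h S)
  have hR := l1_nonneg (restrict h Sᶜ)
  have hP0 : 0 ≤ Real.sqrt k * l2norm (restrict h S) := mul_nonneg (Real.sqrt_nonneg _) hs
  refine abs_le_of_sq_le_sq' ?_ (by linarith) |>.2
  have t1 : (k : ℝ) * ∑ i ∈ Sᶜ, h i ^ 2 ≤ l1norm (restrict h S) * l1norm (restrict h Sᶜ) := by
    rw [l1norm, l1norm, sum_restrict h S (fun t => |t|) (by simp),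
      sum_restrict h Sᶜ (fun t => |t|) (by simp), Finset.mul_sum, Finset.mul_sum]
    refine Finset.sum_le_sum fun i hi => ?_
    have := mul_le_mul_of_nonneg_right (htop i (Finset.mem_compl.1 hi)) (abs_nonneg (h i))
    rwa [mul_assoc, abs_mul_abs_self, ← sq] at this
  have t2 : l2norm h ^ 2 = l2norm (restrict h S) ^ 2 + ∑ i ∈ Sᶜ, h i ^ 2 := by
    rw [l2_sq, l2_sq, sum_restrict h S (fun t => t ^ 2) (by simp), Finset.sum_add_sum_compl]
  have t3 := mul_le_mul_of_nonneg_right hP hR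
  have e : (Real.sqrt k * l2norm h) ^ 2 = (Real.sqrt k * l2norm (restrict h S)) ^ 2
      + k * ∑ i ∈ Sᶜ, h i ^ 2 := by
    rw [mul_pow, t2, mul_pow, hsk]; ring
  rw [e]
  nlinarith [sq_nonneg (l1norm (restrict h Sᶜ))]

/-- The final scalar estimate. -/
lemma scalar_final (a th w R sg lam q X : ℝ) (ha : 0 ≤ a) (hth : 0 ≤ th) (hth1 : th < 1)
    (hw : 0 ≤ w) (hR : 0 ≤ R) (hsg : 0 ≤ sg) (hlam : 0 < lam) (hq : 0 < q)
    (hX : q * X ≤ a * w + th * R + R / 2)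
    (hcone : (1 - th) * R ≤ (a + 1) * w + 2 * sg - w ^ 2 / (2 * lam)) :
    X ≤ (2 * a * (th ^ 2 + 3 * th + 3) + 2 * (2 * th ^ 2 + 4 * th + 1))
        / (q * (1 - th) * (a + 1)) * sg
      + (a * (5 + 2 * th) + 2 * (2 * th ^ 2 + 4 * th + 1)) * (a + 1) / (q * (1 - th)) * lam := by
  have h1 : 0 < 1 - th := by linarith
  have ha1 : 0 < a + 1 := by linarith
  have hcone' : 2 * lam * ((1 - th) * R) ≤ 2 * lam * ((a + 1) * w + 2 * sg) - w ^ 2 := by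
    have := mul_le_mul_of_nonneg_left hcone (by positivity : 0 ≤ 2 * lam)
    have e : 2 * lam * (w ^ 2 / (2 * lam)) = w ^ 2 := by field_simp
    nlinarith
  -- bound on w
  have hwb : (a + 1) * w ≤ 2 * lam * (a + 1) ^ 2 + 2 * sg := by
    by_contra hc
    push Not at hc
    have hRn : 0 ≤ 2 * lam * ((1 - th) * R) := by positivity
    have i1 : w ^ 2 ≤ 2 * lam * ((a + 1) * w + 2 * sg) := by linarith
    have i2 : 2 * lam * (a + 1) ≤ w := by
      by_contra hh
      push Not at hh
      nlinarith
    have i3 : w * (2 * lam * (a + 1) ^ 2 + 2 * sg) < w * ((a + 1) * w) :=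
      mul_lt_mul_of_pos_left hc (lt_of_lt_of_le (by positivity) i2)
    have i4 : (a + 1) * w ^ 2 ≤ (a + 1) * (2 * lam * ((a + 1) * w + 2 * sg)) :=
      mul_le_mul_of_nonneg_left i1 ha1.le
    have i5 : 2 * sg * (2 * lam * (a + 1)) ≤ 2 * sg * w :=
      mul_le_mul_of_nonneg_left i2 (by positivity)
    nlinarith
  have hRb : (1 - th) * R ≤ lam * (a + 1) ^ 2 / 2 + 2 * sg := by
    have : 2 * lam * ((1 - th) * R) ≤ 2 * lam * (lam * (a + 1) ^ 2 / 2 + 2 * sg) := by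
      nlinarith [sq_nonneg (w - lam * (a + 1))]
    exact le_of_mul_le_mul_left this (by positivity)
  have e : (2 * a * (th ^ 2 + 3 * th + 3) + 2 * (2 * th ^ 2 + 4 * th + 1))
        / (q * (1 - th) * (a + 1)) * sg
      + (a * (5 + 2 * th) + 2 * (2 * th ^ 2 + 4 * th + 1)) * (a + 1) / (q * (1 - th)) * lam
      = ((2 * a * (th ^ 2 + 3 * th + 3) + 2 * (2 * th ^ 2 + 4 * th + 1)) * sg
        + (a * (5 + 2 * th) + 2 * (2 * th ^ 2 + 4 * th + 1)) * (a + 1) ^ 2 * lam)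
        / (q * ((1 - th) * (a + 1))) := by
    field_simp
  rw [e, le_div_iff₀ (by positivity)]
  have j1 : q * X * ((1 - th) * (a + 1)) ≤ (a * w + th * R + R / 2) * ((1 - th) * (a + 1)) :=
    mul_le_mul_of_nonneg_right hX (by positivity)
  have j2 : a * (1 - th) * ((a + 1) * w) ≤ a * (1 - th) * (2 * lam * (a + 1) ^ 2 + 2 * sg) :=
    mul_le_mul_of_nonneg_left hwb (by positivity)
  have j3 : (th + 1 / 2) * (a + 1) * ((1 - th) * R)
      ≤ (th + 1 / 2) * (a + 1) * (lam * (a + 1) ^ 2 / 2 + 2 * sg) :=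
    mul_le_mul_of_nonneg_left hRb (by positivity)
  have k1 : 0 ≤ ((2 * a * (th ^ 2 + 3 * th + 3) + 2 * (2 * th ^ 2 + 4 * th + 1))
      - (3 * a + 2 * th + 1)) * sg := by
    refine mul_nonneg ?_ hsg
    have : 0 ≤ a * (2 * th ^ 2 + 6 * th + 3) + 4 * th ^ 2 + 6 * th + 1 := by positivity
    linarith
  have k2 : 0 ≤ ((a * (5 + 2 * th) + 2 * (2 * th ^ 2 + 4 * th + 1))
      - (2 * a * (1 - th) + (th + 1 / 2) * (a + 1) / 2)) * ((a + 1) ^ 2 * lam) := by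
    refine mul_nonneg ?_ (by positivity)
    have : 0 ≤ a * (3 - 1 / 4 + 3 * th + th / 2) + 4 * th ^ 2 + 7 * th + th / 2 + 7 / 4 := by
      have : 0 ≤ 3 - 1 / 4 + 3 * th + th / 2 := by linarith
      positivity
    linarith
  linarith

theorem stmt_8 {m n : ℕ} (A : Matrix (Fin m) (Fin n) ℝ)
    (hA : ∀ j, l2norm (fun i => A i j) = 1)
    (k : ℕ) (hk : 2 ≤ k)
    (hμ : mutualCoherence A < 1 / (2 * (k : ℝ) - 1))
    (lam : ℝ) (hlam : 0 < lam)
    (x : Fin n → ℝ) (z : Fin m → ℝ) (b : Fin m → ℝ) (hb : b = A.mulVec x + z)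
    (hz : l2norm z ≤ lam)
    (xs : Fin n → ℝ)
    (hmin : ∀ u : Fin n → ℝ,
      l1norm xs + 1 / (2 * lam) * l2norm (b - A.mulVec xs) ^ 2 ≤
        l1norm u + 1 / (2 * lam) * l2norm (b - A.mulVec u) ^ 2)
    (xk : Fin n → ℝ) (hxk1 : sparse k xk)
    (hxk2 : ∀ y : Fin n → ℝ, sparse k y → l2norm (xk - x) ≤ l2norm (y - x)) :
    l2norm (xs - x) ≤
      (2 * Real.sqrt k * alpha1 k (mutualCoherence A) * fk k (alpha2 k (mutualCoherence A))
          + 2 * gk k (alpha2 k (mutualCoherence A)))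
        / (Real.sqrt k * (1 - Real.sqrt k * alpha2 k (mutualCoherence A))
          * (Real.sqrt k * alpha1 k (mutualCoherence A) + 1)) * l1norm (x - xk)
      + (Real.sqrt k * alpha1 k (mutualCoherence A)
            * (5 + 2 * Real.sqrt k * alpha2 k (mutualCoherence A))
          + 2 * gk k (alpha2 k (mutualCoherence A)))
        * (Real.sqrt k * alpha1 k (mutualCoherence A) + 1)
        / (Real.sqrt k * (1 - Real.sqrt k * alpha2 k (mutualCoherence A))) * lam := by
  set μ := mutualCoherence A with hμdef
  have hμ0 : 0 ≤ μ := mc_nonneg A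
  have hk2 : (2 : ℝ) ≤ k := by exact_mod_cast hk
  have hμ' : μ * (2 * (k : ℝ) - 1) < 1 := by rwa [lt_div_iff₀ (by linarith)] at hμ
  have hpos : 0 < 1 - ((k : ℝ) - 1) * μ := by nlinarith
  have hq : 0 < Real.sqrt k := Real.sqrt_pos.2 (by linarith)
  have hsk : Real.sqrt k * Real.sqrt k = k := Real.mul_self_sqrt (by linarith)
  have hsk2 : Real.sqrt k ^ 2 = k := by rw [sq, hsk]
  have ha1 : 0 ≤ alpha1 k μ := div_nonneg (Real.sqrt_nonneg _) hpos.le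
  have ha2 : 0 ≤ alpha2 k μ := div_nonneg (mul_nonneg hq.le hμ0) hpos.le
  have hth1 : Real.sqrt k * alpha2 k μ < 1 := by
    unfold alpha2
    rw [← mul_div_assoc, ← mul_assoc, hsk, div_lt_one hpos]
    linarith
  set h : Fin n → ℝ := xs - x with hh
  obtain ⟨S, hS, hmaxS, htop⟩ := exists_top h k
  set T : Finset (Fin n) := Finset.univ.filter fun i => xk i ≠ 0 with hT
  have hTc : T.card ≤ k := hxk1
  have hST := hmaxS T hTc
  -- complement sums
  have rS : l1norm (restrict h Sᶜ) = ∑ i ∈ Sᶜ, |h i| :=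
    sum_restrict h Sᶜ (fun t => |t|) (by simp)
  have rT : l1norm (restrict h Tᶜ) = ∑ i ∈ Tᶜ, |h i| :=
    sum_restrict h Tᶜ (fun t => |t|) (by simp)
  have rT' : l1norm (restrict h T) = ∑ i ∈ T, |h i| :=
    sum_restrict h T (fun t => |t|) (by simp)
  have cS := Finset.sum_add_sum_compl S fun i => |h i|
  have cT := Finset.sum_add_sum_compl T fun i => |h i|
  have hRST : l1norm (restrict h Sᶜ) ≤ l1norm (restrict h Tᶜ) := by
    rw [rS, rT]; linarith
  have b1 := tail_bound h k S hS hk htop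
  have b2 := head_bound A hA k hk hpos h S hS
  have b3 := head_bound A hA k hk hpos h T hTc
  have b4 := l1_le_l2 h k T hTc
  rw [← hμdef] at b2 b3
  -- the minimality inequality
  have hm := hmin x
  have z1 : b - A.mulVec x = z := by rw [hb]; simp
  have z2 : b - A.mulVec xs = z - A.mulVec h := by
    rw [hb, hh, Matrix.mulVec_sub]; abel
  rw [z1, z2] at hm
  have z3 : l2norm (z - A.mulVec h) ^ 2
      = l2norm z ^ 2 - 2 * ∑ r, z r * A.mulVec h r + l2norm (A.mulVec h) ^ 2 := by
    rw [l2_sq, l2_sq, l2_sq, Finset.mul_sum, ← Finset.sum_sub_distrib, ← Finset.sum_add_distrib]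
    exact Finset.sum_congr rfl fun r _ => by simp only [Pi.sub_apply]; ring
  have z4 := cs_l2 z (A.mulVec h)
  have hw : 0 ≤ l2norm (A.mulVec h) := l2_nonneg _
  have z5 := mul_le_mul_of_nonneg_right hz hw
  have m1 : l1norm xs - l1norm x
      ≤ l2norm (A.mulVec h) - l2norm (A.mulVec h) ^ 2 / (2 * lam) := by
    rw [z3] at hm
    have : l1norm xs - l1norm x ≤ 1 / (2 * lam) *
        (2 * (lam * l2norm (A.mulVec h)) - l2norm (A.mulVec h) ^ 2) := by
      have : 1 / (2 * lam) * (2 * ∑ r, z r * A.mulVec h r - l2norm (A.mulVec h) ^ 2)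
        ≤ 1 / (2 * lam) * (2 * (lam * l2norm (A.mulVec h)) - l2norm (A.mulVec h) ^ 2) :=
        mul_le_mul_of_nonneg_left (by linarith) (by positivity)
      linarith
    refine this.trans (le_of_eq ?_)
    field_simp
  have m2 : ∑ i ∈ Tᶜ, |h i| - ∑ i ∈ T, |h i| - 2 * l1norm (x - xk) ≤ l1norm xs - l1norm x := by
    have hx1 : ∑ i ∈ Tᶜ, |x i| ≤ l1norm (x - xk) := by
      have : ∑ i ∈ Tᶜ, |x i| = ∑ i ∈ Tᶜ, |(x - xk) i| := by
        refine Finset.sum_congr rfl fun i hi => ?_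
        have : xk i = 0 := by simpa [hT] using hi
        simp [this]
      rw [this]
      exact Finset.sum_le_sum_of_subset_of_nonneg (Finset.subset_univ _)
        fun _ _ _ => abs_nonneg _
    have p1 : ∑ i ∈ T, (|x i| - |h i|) ≤ ∑ i ∈ T, |xs i| := Finset.sum_le_sum fun i _ => by
      have := abs_sub_abs_le_abs_sub (x i) (xs i)
      rw [abs_sub_comm] at this
      simp only [hh, Pi.sub_apply]; linarith
    have p2 : ∑ i ∈ Tᶜ, (|h i| - |x i|) ≤ ∑ i ∈ Tᶜ, |xs i| := Finset.sum_le_sum fun i _ => by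
      have := abs_sub (xs i) (x i)
      simp only [hh, Pi.sub_apply]; linarith
    rw [Finset.sum_sub_distrib] at p1 p2
    have c1 := Finset.sum_add_sum_compl T fun i => |xs i|
    have c2 := Finset.sum_add_sum_compl T fun i => |x i|
    unfold l1norm at hx1 ⊢
    linarith
  rw [← rT, ← rT'] at m2
  have hR : 0 ≤ l1norm (restrict h Tᶜ) := l1_nonneg _
  have d2 := mul_le_mul_of_nonneg_left b2 hq.le
  have d3 := mul_le_mul_of_nonneg_left b3 hq.le
  have d4 := mul_le_mul_of_nonneg_left hRST (mul_nonneg hq.le ha2)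
  have main := scalar_final (Real.sqrt k * alpha1 k μ) (Real.sqrt k * alpha2 k μ)
    (l2norm (A.mulVec h)) (l1norm (restrict h Tᶜ)) (l1norm (x - xk)) lam (Real.sqrt k) (l2norm h)
    (mul_nonneg hq.le ha1) (mul_nonneg hq.le ha2) hth1 hw hR (l1_nonneg _) hlam hq
    (by linarith) (by linarith)
  refine main.trans (le_of_eq ?_)
  unfold fk gk
  rw [mul_pow, hsk2]
  ring
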